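/- arXiv:1607.05702 — 3 statements merged into one kernel-verified Lean document; each statement's English description precedes it below -/
import Mathlib

section
/- Let m, m' ≥ 1, let a : Fin m → ℝ and b : Fin m' → ℝ with a i > 0 for all i, P := Σ_i a i = Σ_j b j, and let p : Fin m → Fin m' → ℝ satisfy: (1) Σ_j p i j = a i for every i; (2) Σ_i p i j = b j for every j; and (3) p 0 j * a i = p i j * a 0 for all i and j (the partial-independence ratio equations). Then p i j = a i * b j / P for all i ∈ Fin m and j ∈ Fin m'; i.e., the system determined by the marginal equations together with the partial independence assumption has the unique solution P(D_i ∧ D'_j) = P(D_i)·P(D'_j)/P. -/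
/-!
The ratio equations say that every column of `p` is proportional to `a`. Comparing totals,
the factor of proportionality of column `j` is `b j / P`.
-/

lemma eq_sum_div_sum_mul_of_proportional {ι K : Type*} [DivisionSemiring K]
    {s : Finset ι} {v a : ι → K} {c : K} (hv : ∀ i ∈ s, v i = c * a i)
    (ha : ∑ i ∈ s, a i ≠ 0) {i : ι} (hi : i ∈ s) :
    v i = (∑ k ∈ s, v k) / (∑ k ∈ s, a k) * a i := by
  have hsum : ∑ k ∈ s, v k = c * ∑ k ∈ s, a k := by
    rw [Finset.mul_sum, Finset.sum_congr rfl hv]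
  rw [hsum, mul_div_cancel_right₀ c ha, hv i hi]

theorem system_has_unique_product_solution_general
    {ι κ K : Type*} [Fintype ι] [Semifield K]
    (a : ι → K) (b : κ → K) (P : K) (i₀ : ι) (ha₀ : a i₀ ≠ 0)
    (hPa : P = ∑ i, a i) (hP : P ≠ 0)
    (p : ι → κ → K)
    (hcol : ∀ j, ∑ i, p i j = b j)
    (hratio : ∀ i j, p i₀ j * a i = p i j * a i₀) (i : ι) (j : κ) :
    p i j = a i * b j / P := by
  subst hPa
  have hprop : ∀ k ∈ Finset.univ, p k j = p i₀ j / a i₀ * a k := fun k _ => by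
    rw [div_mul_eq_mul_div, eq_div_iff ha₀, hratio k j]
  calc
    p i j = (∑ k, p k j) / (∑ k, a k) * a i :=
      eq_sum_div_sum_mul_of_proportional hprop hP (Finset.mem_univ i)
    _ = a i * b j / ∑ k, a k := by rw [hcol j, mul_comm, mul_div_assoc]

/-- Uniqueness: if `a i > 0` for all `i`, `P = Σ_i a i = Σ_j b j`, and `p` satisfies
the marginal equations together with the partial-independence ratio equations
`p 0 j * a i = p i j * a 0`, then `p i j = a i * b j / P` for all `i, j`. -/
theorem system_has_unique_product_solution
    {m m' : ℕ} (hm : 1 ≤ m) (hm' : 1 ≤ m')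
    (a : Fin m → ℝ) (b : Fin m' → ℝ) (P : ℝ)
    (ha : ∀ i, 0 < a i)
    (hPa : P = ∑ i, a i) (hPb : P = ∑ j, b j)
    (p : Fin m → Fin m' → ℝ)
    (hrow : ∀ i : Fin m, ∑ j, p i j = a i)
    (hcol : ∀ j : Fin m', ∑ i, p i j = b j)
    (hratio : ∀ i : Fin m, ∀ j : Fin m', p ⟨0, hm⟩ j * a i = p i j * a ⟨0, hm⟩) :
    ∀ i : Fin m, ∀ j : Fin m', p i j = a i * b j / P := by
  have hP : 0 < P := hPa ▸ Finset.sum_pos (fun i _ => ha i) ⟨⟨0, hm⟩, Finset.mem_univ _⟩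
  exact system_has_unique_product_solution_general a b P _ (ha _).ne' hPa hP.ne' p hcol hratio
end

section
/- Let r and s be pr-relations whose formulas depend only on disjoint variable sets V and W respectively, and let q = r ⊎ s be their integration. Then PW(q) = { A ∪ B | A ∈ PW(r), B ∈ PW(s), and A and B are compatible }; that is, the possible worlds of the integrated epr-relation are exactly the unions of compatible pairs of possible worlds of the two sources. -/
/-!
A valid assignment `μ` makes the worlds `r_μ` and `s_μ` agree on the common tuples; conversely,
this agreement makes `μ` valid because tuples carry unique formulas. Under any `μ` the integration
has the world `r_μ ∪ (s_μ \ T(r))`, which is `r_μ ∪ s_μ` once the two worlds agree on the common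
tuples. An arbitrary pair `r_μ`, `s_ν` arises from a single assignment, equal to `μ` on `V` and to
`ν` elsewhere, because `V` and `W` are disjoint.
-/

open scoped Classical

variable {Var Tup : Type*}

/-- A pr-relation is functional: each tuple occurs in at most one tuple–formula pair. -/
def Functional (r : Set (Tup × ((Var → Bool) → Bool))) : Prop :=
  ∀ t (f g : (Var → Bool) → Bool), (t, f) ∈ r → (t, g) ∈ r → f = g

/-- The tuple set `T(r)` of a pr-relation: the set of first components. -/
def tupleSet (r : Set (Tup × ((Var → Bool) → Bool))) : Set Tup :=
  Prod.fst '' r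

/-- The possible world `r_μ` of a pr-relation under an assignment `μ`. -/
def world (r : Set (Tup × ((Var → Bool) → Bool))) (μ : Var → Bool) : Set Tup :=
  { t | ∃ f : (Var → Bool) → Bool, (t, f) ∈ r ∧ f μ = true }

/-- The possible worlds `PW(r)` of a pr-relation. -/
def PW (r : Set (Tup × ((Var → Bool) → Bool))) : Set (Set Tup) :=
  { A | ∃ μ : Var → Bool, A = world r μ }

/-- `A ⊆ T` and `B ⊆ T'` are compatible if `A ∩ (T ∩ T') = B ∩ (T ∩ T')`. -/
def Compatible (T T' A B : Set Tup) : Prop :=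
  A ∩ (T ∩ T') = B ∩ (T ∩ T')

/-- A formula depends only on the variables in `V`. -/
def DependsOnly (f : (Var → Bool) → Bool) (V : Set Var) : Prop :=
  ∀ μ μ' : Var → Bool, (∀ v ∈ V, μ v = μ' v) → f μ = f μ'

/-- The tuple–formula pairs of the integration `q = r ⊎ s`: pairs of `r`, together with
the pairs of `s` whose tuple is not a tuple of `r` (for common tuples the formula is
taken from `r`). -/
def integ (r s : Set (Tup × ((Var → Bool) → Bool))) :
    Set (Tup × ((Var → Bool) → Bool)) :=
  r ∪ { p | p ∈ s ∧ p.1 ∉ tupleSet r }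

/-- The event constraints of the integration `q = r ⊎ s`: the pairs `(f_t, g_t)` for
each common tuple `t`, where `f_t` and `g_t` are the formulas of `t` in `r` and `s`. -/
def integConstraints (r s : Set (Tup × ((Var → Bool) → Bool))) :
    Set (((Var → Bool) → Bool) × ((Var → Bool) → Bool)) :=
  { fg | ∃ t : Tup, (t, fg.1) ∈ r ∧ (t, fg.2) ∈ s }

/-- An assignment is valid for the integration `r ⊎ s` if it satisfies every event
constraint `f_t ≡ g_t` coming from a common tuple `t`. -/
def ValidInteg (r s : Set (Tup × ((Var → Bool) → Bool))) (μ : Var → Bool) : Prop :=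
  ∀ t (f g : (Var → Bool) → Bool), (t, f) ∈ r → (t, g) ∈ s → f μ = g μ

/-- The possible worlds of the integration `r ⊎ s` (over valid assignments). -/
def PWinteg (r s : Set (Tup × ((Var → Bool) → Bool))) : Set (Set Tup) :=
  { A | ∃ μ : Var → Bool, ValidInteg r s μ ∧ A = world (integ r s) μ }

/-- An assignment is valid for a set of event constraints. -/
def ValidEpr (C : Set (((Var → Bool) → Bool) × ((Var → Bool) → Bool)))
    (μ : Var → Bool) : Prop :=
  ∀ f g : (Var → Bool) → Bool, (f, g) ∈ C → f μ = g μ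

/-- The possible worlds of an epr-relation `q` with event constraints `C`. -/
def PWepr (q : Set (Tup × ((Var → Bool) → Bool)))
    (C : Set (((Var → Bool) → Bool) × ((Var → Bool) → Bool))) : Set (Set Tup) :=
  { A | ∃ μ : Var → Bool, ValidEpr C μ ∧ A = world q μ }

/-- The event-variable formula `φ^r_A` of a relation `A ⊆ T(r)`:
`φ^r_A μ = true` iff `f μ = true` for every `(t, f) ∈ r` with `t ∈ A` and
`f μ = false` for every `(t, f) ∈ r` with `t ∉ A`. -/
noncomputable def evf (r : Set (Tup × ((Var → Bool) → Bool))) (A : Set Tup) :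
    (Var → Bool) → Bool :=
  fun μ => decide (∀ (t : Tup) (f : (Var → Bool) → Bool), (t, f) ∈ r → (f μ = true ↔ t ∈ A))

/-- The event-variable formula `Ξ^q_A` of `A ⊆ T(q)` for an epr-relation `q` with
event constraints `C` (conjoining all event constraints). -/
noncomputable def eevf (q : Set (Tup × ((Var → Bool) → Bool)))
    (C : Set (((Var → Bool) → Bool) × ((Var → Bool) → Bool))) (A : Set Tup) :
    (Var → Bool) → Bool :=
  fun μ => decide (ValidEpr C μ ∧
    ∀ (t : Tup) (h : (Var → Bool) → Bool), (t, h) ∈ q → (h μ = true ↔ t ∈ A))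

theorem exists_eq_and_eq_of_dependsOn_of_disjoint {ι β γ : Type*} {α : ι → Type*}
    {f : (∀ i, α i) → β} {g : (∀ i, α i) → γ} {V W : Set ι}
    (hf : DependsOn f V) (hg : DependsOn g W) (hVW : Disjoint V W) (x y : ∀ i, α i) :
    ∃ z, f z = f x ∧ g z = g y :=
  ⟨V.piecewise x y, hf fun _ hi => V.piecewise_eq_of_mem x y hi,
    hg fun _ hi => V.piecewise_eq_of_notMem x y (hVW.notMem_of_mem_right hi)⟩

namespace Compatible

variable {T T' A B : Set Tup}

theorem mem_iff (h : Compatible T T' A B) {t : Tup} (ht : t ∈ T) (ht' : t ∈ T') :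
    t ∈ A ↔ t ∈ B :=
  ⟨fun hA => (h.subset ⟨hA, ht, ht'⟩).1, fun hB => (h.superset ⟨hB, ht, ht'⟩).1⟩

theorem union_sdiff_eq_union (h : Compatible T T' A B) (hB : B ⊆ T') : A ∪ B \ T = A ∪ B := by
  have inter_subset : B ∩ T ⊆ A := fun _ ⟨htB, htT⟩ => (h.mem_iff htT (hB htB)).mpr htB
  calc
    A ∪ B \ T = (A ∪ B ∩ T) ∪ B \ T := by rw [Set.union_eq_self_of_subset_right inter_subset]
    _ = A ∪ B := by rw [Set.union_assoc, Set.inter_union_sdiff]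

end Compatible

section

variable {r s : Set (Tup × ((Var → Bool) → Bool))} {μ : Var → Bool}

theorem mem_tupleSet {t : Tup} {f : (Var → Bool) → Bool} (hf : (t, f) ∈ r) : t ∈ tupleSet r :=
  Set.mem_image_of_mem Prod.fst hf

theorem world_subset_tupleSet : world r μ ⊆ tupleSet r :=
  fun _ ⟨_, hf, _⟩ => mem_tupleSet hf

theorem Functional.mem_world_iff (hr : Functional r) {t : Tup} {f : (Var → Bool) → Bool}
    (hf : (t, f) ∈ r) : t ∈ world r μ ↔ f μ = true := by
  refine ⟨?_, fun hfμ => ⟨f, hf, hfμ⟩⟩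
  rintro ⟨g, hg, hgμ⟩
  rwa [hr t f g hf hg]

theorem dependsOn_world {V : Set Var}
    (hr : ∀ (t : Tup) (f : (Var → Bool) → Bool), (t, f) ∈ r → DependsOnly f V) :
    DependsOn (world r) V := by
  intro μ ν h
  ext t
  refine exists_congr fun f => and_congr_right fun hf => ?_
  rw [hr t f hf μ ν h]

theorem world_integ_eq_union_sdiff :
    world (integ r s) μ = world r μ ∪ world s μ \ tupleSet r := by
  ext t
  constructor
  · rintro ⟨f, hf | ⟨hf, ht⟩, hfμ⟩
    · exact Or.inl ⟨f, hf, hfμ⟩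
    · exact Or.inr ⟨⟨f, hf, hfμ⟩, ht⟩
  · rintro (⟨f, hf, hfμ⟩ | ⟨⟨g, hg, hgμ⟩, ht⟩)
    · exact ⟨f, Or.inl hf, hfμ⟩
    · exact ⟨g, Or.inr ⟨hg, ht⟩, hgμ⟩

theorem ValidInteg.compatible_world (h : ValidInteg r s μ) :
    Compatible (tupleSet r) (tupleSet s) (world r μ) (world s μ) := by
  ext t
  refine and_congr_left ?_
  rintro ⟨⟨⟨_, f⟩, hf, rfl⟩, ⟨⟨_, g⟩, hg, rfl⟩⟩
  constructor
  · rintro ⟨f', hf', hf'μ⟩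
    exact ⟨g, hg, (h _ f' g hf' hg).symm.trans hf'μ⟩
  · rintro ⟨g', hg', hg'μ⟩
    exact ⟨f, hf, (h _ f g' hf hg').trans hg'μ⟩

theorem Compatible.validInteg (hr : Functional r) (hs : Functional s)
    (h : Compatible (tupleSet r) (tupleSet s) (world r μ) (world s μ)) : ValidInteg r s μ := by
  intro t f g hf hg
  have eq_true_iff : f μ = true ↔ g μ = true := by
    rw [← hr.mem_world_iff hf, ← hs.mem_world_iff hg]
    exact h.mem_iff (mem_tupleSet hf) (mem_tupleSet hg)
  exact Bool.eq_iff_iff.mpr eq_true_iff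

theorem ValidInteg.world_integ_eq_union (h : ValidInteg r s μ) :
    world (integ r s) μ = world r μ ∪ world s μ :=
  world_integ_eq_union_sdiff.trans (h.compatible_world.union_sdiff_eq_union world_subset_tupleSet)

end

theorem PW_integ_eq_unions_of_compatible_pairs_general
    (r s : Set (Tup × ((Var → Bool) → Bool))) (V W : Set Var)
    (hrFun : Functional r) (hsFun : Functional s)
    (hVW : V ∩ W = ∅)
    (hrV : ∀ (t : Tup) (f : (Var → Bool) → Bool), (t, f) ∈ r → DependsOnly f V)
    (hsW : ∀ (t : Tup) (g : (Var → Bool) → Bool), (t, g) ∈ s → DependsOnly g W) :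
    PWinteg r s =
      { C | ∃ A ∈ PW r, ∃ B ∈ PW s,
          Compatible (tupleSet r) (tupleSet s) A B ∧ C = A ∪ B } := by
  ext C
  constructor
  · rintro ⟨μ, hvalid, rfl⟩
    exact ⟨world r μ, ⟨μ, rfl⟩, world s μ, ⟨μ, rfl⟩, hvalid.compatible_world,
      hvalid.world_integ_eq_union⟩
  · rintro ⟨_, ⟨μ, rfl⟩, _, ⟨ν, rfl⟩, hcompat, rfl⟩
    obtain ⟨ρ, hρμ, hρν⟩ := exists_eq_and_eq_of_dependsOn_of_disjoint (dependsOn_world hrV)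
      (dependsOn_world hsW) (Set.disjoint_iff_inter_eq_empty.mpr hVW) μ ν
    rw [← hρμ, ← hρν] at hcompat ⊢
    have hvalid : ValidInteg r s ρ := hcompat.validInteg hrFun hsFun
    exact ⟨ρ, hvalid, hvalid.world_integ_eq_union.symm⟩

/-- The possible worlds of the integrated epr-relation `q = r ⊎ s` are exactly the
unions of compatible pairs of possible worlds of the two sources. -/
theorem PW_integ_eq_unions_of_compatible_pairs
    (r s : Set (Tup × ((Var → Bool) → Bool))) (V W : Set Var)
    (hrFin : r.Finite) (hsFin : s.Finite)
    (hrFun : Functional r) (hsFun : Functional s)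
    (hVW : V ∩ W = ∅)
    (hrV : ∀ (t : Tup) (f : (Var → Bool) → Bool), (t, f) ∈ r → DependsOnly f V)
    (hsW : ∀ (t : Tup) (g : (Var → Bool) → Bool), (t, g) ∈ s → DependsOnly g W) :
    PWinteg r s =
      { C | ∃ A ∈ PW r, ∃ B ∈ PW s,
          Compatible (tupleSet r) (tupleSet s) A B ∧ C = A ∪ B } :=
  PW_integ_eq_unions_of_compatible_pairs_general r s V W hrFun hsFun hVW hrV hsW
end

section
/- (Single-tuple transformation, case v ∈ q_{ij}.) Let r and s be pr-relations, let (v, h) ∈ r with v ∉ T(s), and set r' := r \ {(v, h)} and s' := s ∪ {(v, h)}. Let A ⊆ T(r) with v ∈ A and B ⊆ T(s). Then for every assignment μ: φ^r_A μ = φ^{r'}_{A \ {v}} μ ∧ h μ, ψ^{s'}_{B ∪ {v}} μ = ψ^s_B μ ∧ h μ, and consequently φ^r_A μ ∧ ψ^s_B μ = φ^{r'}_{A \ {v}} μ ∧ ψ^{s'}_{B ∪ {v}} μ; i.e., the event-variable formulas φ^r_A ∧ ψ^s_B and φ^{r'}_{A \ {v}} ∧ ψ^{s'}_{B ∪ {v}}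 are logically equivalent. -/
/-!
The event-variable formula turns unions of relations into conjunctions, and the formula of `r` at
`A` only sees which tuples of `r` belong to `A`. Hence moving a pair `(v, h)` from one relation to
another, and `v` from one chosen subset to the other, moves the conjunct `h` between their
formulas, provided that `v` occurs in no other pair of either relation.
-/

open scoped Classical

variable {Var Tup : Type*}

section EventVariableFormula

variable {r s : Set (Tup × ((Var → Bool) → Bool))} {A B : Set Tup}
  {v : Tup} {h : (Var → Bool) → Bool}

theorem Functional.notMem_tupleSet_sdiff_singleton (hr : Functional r) (hvr : (v, h) ∈ r) :
    v ∉ tupleSet (r \ {(v, h)}) := by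
  rintro ⟨⟨_, f⟩, ⟨hfr, hne⟩, rfl⟩
  exact hne (congrArg (Prod.mk _) (hr _ f h hfr hvr))

theorem evf_eq_true_iff {μ : Var → Bool} :
    evf r A μ = true ↔ ∀ t f, (t, f) ∈ r → (f μ = true ↔ t ∈ A) :=
  decide_eq_true_iff

theorem evf_union (r s : Set (Tup × ((Var → Bool) → Bool))) (A : Set Tup) (μ : Var → Bool) :
    evf (r ∪ s) A μ = (evf r A μ && evf s A μ) := by
  rw [Bool.eq_iff_iff]
  simp only [Bool.and_eq_true, evf_eq_true_iff, Set.mem_union, or_imp, forall_and]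

theorem evf_singleton_of_mem (hvA : v ∈ A) (μ : Var → Bool) : evf {(v, h)} A μ = h μ := by
  rw [Bool.eq_iff_iff, evf_eq_true_iff]
  simp [hvA]

theorem evf_congr (hAB : ∀ t ∈ tupleSet r, t ∈ A ↔ t ∈ B) : evf r A = evf r B := by
  funext μ
  rw [Bool.eq_iff_iff, evf_eq_true_iff, evf_eq_true_iff]
  exact forall₃_congr fun t _ htr => by rw [hAB t (Set.mem_image_of_mem Prod.fst htr)]

theorem evf_union_singleton_right_of_notMem (hvr : v ∉ tupleSet r) (A : Set Tup) :
    evf r (A ∪ {v}) = evf r A :=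
  evf_congr fun _ ht => or_iff_left (ne_of_mem_of_not_mem ht hvr)

theorem evf_union_singleton_union_singleton (hvs : v ∉ tupleSet s) (B : Set Tup)
    (μ : Var → Bool) :
    evf (s ∪ {(v, h)}) (B ∪ {v}) μ = (evf s B μ && h μ) := by
  rw [evf_union, evf_union_singleton_right_of_notMem hvs,
    evf_singleton_of_mem (Set.mem_union_right B (Set.mem_singleton v))]

theorem evf_eq_evf_sdiff_singleton_and (hvr : (v, h) ∈ r) (hv : v ∉ tupleSet (r \ {(v, h)}))
    (hvA : v ∈ A) (μ : Var → Bool) :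
    evf r A μ = (evf (r \ {(v, h)}) (A \ {v}) μ && h μ) := by
  rw [← evf_union_singleton_union_singleton hv,
    Set.sdiff_union_of_subset (Set.singleton_subset_iff.2 hvr),
    Set.sdiff_union_of_subset (Set.singleton_subset_iff.2 hvA)]

end EventVariableFormula

theorem single_tuple_transformation_mem_general
    (r s : Set (Tup × ((Var → Bool) → Bool))) (hrFun : Functional r)
    (v : Tup) (h : (Var → Bool) → Bool)
    (hvr : (v, h) ∈ r) (hvs : v ∉ tupleSet s)
    (A : Set Tup) (hvA : v ∈ A) (B : Set Tup) (μ : Var → Bool) :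
    evf r A μ = (evf (r \ {(v, h)}) (A \ {v}) μ && h μ) ∧
    evf (s ∪ {(v, h)}) (B ∪ {v}) μ = (evf s B μ && h μ) ∧
    (evf r A μ && evf s B μ) =
      (evf (r \ {(v, h)}) (A \ {v}) μ && evf (s ∪ {(v, h)}) (B ∪ {v}) μ) := by
  have remove_pair :=
    evf_eq_evf_sdiff_singleton_and hvr (hrFun.notMem_tupleSet_sdiff_singleton hvr) hvA μ
  have add_pair := evf_union_singleton_union_singleton (h := h) hvs B μ
  refine ⟨remove_pair, add_pair, ?_⟩
  rw [remove_pair, add_pair, Bool.and_assoc, Bool.and_comm (h μ)]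

/-- Single-tuple transformation, case `v ∈ q_{ij}`: with `r' = r \ {(v, h)}` and
`s' = s ∪ {(v, h)}`, for `A ⊆ T(r)` with `v ∈ A` and `B ⊆ T(s)`,
`φ^r_A μ = φ^{r'}_{A \ {v}} μ ∧ h μ`, `ψ^{s'}_{B ∪ {v}} μ = ψ^s_B μ ∧ h μ`, and hence
`φ^r_A ∧ ψ^s_B` and `φ^{r'}_{A \ {v}} ∧ ψ^{s'}_{B ∪ {v}}` are logically equivalent. -/
theorem single_tuple_transformation_mem
    (r s : Set (Tup × ((Var → Bool) → Bool)))
    (hrFin : r.Finite) (hsFin : s.Finite)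
    (hrFun : Functional r) (hsFun : Functional s)
    (v : Tup) (h : (Var → Bool) → Bool)
    (hvr : (v, h) ∈ r) (hvs : v ∉ tupleSet s)
    (A : Set Tup) (hA : A ⊆ tupleSet r) (hvA : v ∈ A)
    (B : Set Tup) (hB : B ⊆ tupleSet s)
    (μ : Var → Bool) :
    evf r A μ = (evf (r \ {(v, h)}) (A \ {v}) μ && h μ) ∧
    evf (s ∪ {(v, h)}) (B ∪ {v}) μ = (evf s B μ && h μ) ∧
    (evf r A μ && evf s B μ) =
      (evf (r \ {(v, h)}) (A \ {v}) μ && evf (s ∪ {(v, h)}) (B ∪ {v}) μ) :=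
  single_tuple_transformation_mem_general r s hrFun v h hvr hvs A hvA B μ
end
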